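/- arXiv:1812.06793 — 2 statements merged into one kernel-verified Lean document; each statement's English description precedes it below -/
import Mathlib

section
/- Let φ be a Bernstein function with representation φ(λ) = a + bλ + ∫_{(0,∞)} (1 − e^{−λs}) μ(ds). Suppose −φ'' ∈ WLSC(α−2, c, x₀) for some c ∈ (0,1], x₀ ≥ 0 and α > 0. Then there is a constant C > 0, depending only on α and c, such that for all x > x₀: C·(−φ''(x)) ≤ ∫_{(0,1/x)} s² μ(ds). -/
open MeasureTheory Real Set

noncomputable section

/-- Weak lower scaling property at infinity. -/
def WLSC (f : ℝ → ℝ) (θ c x₀ : ℝ) : Prop :=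
  ∀ lam : ℝ, 1 ≤ lam → ∀ x : ℝ, x₀ < x → c * lam ^ θ * f x ≤ f (lam * x)

/-!
Differentiating twice under the integral gives `-φ''(x) = ∫ s² e^{-xs} μ(ds)`. For `l ≥ 1` and
`s ≥ 1/x` we have `e^{-lxs} ≤ e^{-(l-1)} e^{-xs}`, so splitting the integral at `1/x` yields
`-φ''(lx) ≤ ∫_{(0,1/x)} s² μ(ds) + e^{-(l-1)} (-φ''(x))`. Weak scaling bounds the left side below by
`c l^(α-2) (-φ''(x))`, and since exponential decay beats any power, the last term can be absorbed by
choosing `l` large depending only on `α` and `c`.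
-/

/-- The moment `∫_{(0,∞)} sⁿ e^{-xs} μ(ds)`, i.e. `(-1)ⁿ` times the formal `n`-th derivative of the
Laplace transform of `μ` on `(0,∞)`. For infinite `μ` it may be finite only for `n ≥ 1`. -/
def laplaceMoment (μ : Measure ℝ) (n : ℕ) (x : ℝ) : ℝ :=
  ∫ s in Ioi (0 : ℝ), s ^ n * Real.exp (-x * s) ∂μ

lemma WLSC.congr {f g : ℝ → ℝ} {θ c x₀ : ℝ} (hf : WLSC f θ c x₀) (hx₀ : 0 ≤ x₀)
    (hfg : EqOn f g (Ioi x₀)) : WLSC g θ c x₀ := by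
  intro lam hlam x hx
  have hlx : x₀ < lam * x := hx.trans_le (le_mul_of_one_le_left (hx₀.trans hx.le) hlam)
  rw [← hfg hx, ← hfg hlx]
  exact hf lam hlam x hx

lemma pow_mul_exp_neg_mul_le {x s : ℝ} (n : ℕ) (hx : 0 < x) (hs : 0 ≤ s) :
    s ^ n * Real.exp (-x * s) ≤ n.factorial / x ^ n := by
  have hexp := Real.pow_div_factorial_le_exp (x * s) (by positivity) n
  rw [neg_mul, Real.exp_neg, ← div_eq_mul_inv, div_le_div_iff₀ (Real.exp_pos _) (by positivity)]
  calc s ^ n * x ^ n = (x * s) ^ n := by ring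
    _ ≤ n.factorial * Real.exp (x * s) := (div_le_iff₀' (by positivity)).1 hexp

lemma exp_neg_mul_le_one {x s : ℝ} (hx : 0 ≤ x) (hs : 0 ≤ s) : Real.exp (-x * s) ≤ 1 :=
  Real.exp_le_one_iff.2 (mul_nonpos_of_nonpos_of_nonneg (neg_nonpos.2 hx) hs)

lemma hasDerivAt_exp_neg_mul (x s : ℝ) :
    HasDerivAt (fun y : ℝ => Real.exp (-y * s)) (-(s * Real.exp (-x * s))) x :=
  (((hasDerivAt_id x).neg).mul_const s).exp.congr_deriv (by simp [mul_comm])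

lemma exists_exp_neg_mul_le_mul_rpow {c δ : ℝ} (θ : ℝ) (hc : 0 < c) (hδ : 0 < δ) :
    ∃ l : ℝ, 1 ≤ l ∧ Real.exp (-((l - 1) * δ)) ≤ c * l ^ θ := by
  have hsmall := (isLittleO_exp_neg_mul_rpow_atTop hδ θ).bound (by positivity : 0 < c * rexp (-δ))
  obtain ⟨l, hl, hl1⟩ := (hsmall.and (Filter.eventually_ge_atTop 1)).exists
  rw [Real.norm_of_nonneg (by positivity), Real.norm_of_nonneg (by positivity)] at hl
  refine ⟨l, hl1, ?_⟩
  calc Real.exp (-((l - 1) * δ)) = Real.exp δ * Real.exp (-δ * l) := by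
        rw [← Real.exp_add]; ring_nf
    _ ≤ Real.exp δ * (c * Real.exp (-δ) * l ^ θ) := by gcongr
    _ = c * l ^ θ := by rw [Real.exp_neg]; field_simp

section LevyMeasure

variable {μ : Measure ℝ}

lemma integrableOn_min_one_of_lintegral_ne_top
    (hμ : ∫⁻ s in Ioi (0 : ℝ), ENNReal.ofReal (min 1 s) ∂μ ≠ ⊤) :
    IntegrableOn (fun s => min 1 s) (Ioi 0) μ := by
  refine (lintegral_ofReal_ne_top_iff_integrable (by fun_prop) ?_).1 hμ
  filter_upwards [ae_restrict_mem measurableSet_Ioi] with s (hs : 0 < s)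
  exact le_min zero_le_one hs.le

variable (hμ : IntegrableOn (fun s => min 1 s) (Ioi 0) μ)
include hμ

lemma integrableOn_of_norm_le_of_norm_le_mul {S : Set ℝ} (hS : MeasurableSet S) (hS0 : S ⊆ Ioi 0)
    {f : ℝ → ℝ} (hf : Measurable f) {A B : ℝ} (hA : ∀ s ∈ S, ‖f s‖ ≤ A)
    (hB : ∀ s ∈ S, ‖f s‖ ≤ B * s) : IntegrableOn f S μ := by
  refine ((hμ.mono_set hS0).const_mul (max A B)).mono' hf.aestronglyMeasurable ?_
  filter_upwards [ae_restrict_mem hS] with s hs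
  have hs0 : 0 < s := hS0 hs
  rcases le_total 1 s with h | h
  · rw [min_eq_left h, mul_one]
    exact (hA s hs).trans (le_max_left A B)
  · rw [min_eq_right h]
    exact (hB s hs).trans (by gcongr; exact le_max_right A B)

lemma integrableOn_exp_neg_mul_sub_one {x : ℝ} (hx : 0 ≤ x) :
    IntegrableOn (fun s => Real.exp (-x * s) - 1) (Ioi 0) μ := by
  have hnorm : ∀ s ∈ Ioi (0 : ℝ), ‖Real.exp (-x * s) - 1‖ = 1 - Real.exp (-x * s) := by
    intro s hs
    rw [Real.norm_of_nonpos (sub_nonpos.2 (exp_neg_mul_le_one hx (le_of_lt hs))), neg_sub]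
  refine integrableOn_of_norm_le_of_norm_le_mul hμ measurableSet_Ioi subset_rfl (by fun_prop)
    (A := 1) (B := x) (fun s hs => ?_) fun s hs => ?_
  · linarith [hnorm s hs, Real.exp_pos (-x * s)]
  · linarith [hnorm s hs, Real.add_one_le_exp (-x * s)]

lemma integrableOn_pow_succ_mul_exp_neg_mul (n : ℕ) {x : ℝ} (hx : 0 < x) :
    IntegrableOn (fun s => s ^ (n + 1) * Real.exp (-x * s)) (Ioi 0) μ := by
  refine integrableOn_of_norm_le_of_norm_le_mul hμ measurableSet_Ioi subset_rfl (by fun_prop)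
    (A := (n + 1).factorial / x ^ (n + 1)) (B := n.factorial / x ^ n)
    (fun s (hs : 0 < s) => ?_) fun s (hs : 0 < s) => ?_ <;>
    rw [Real.norm_of_nonneg (by positivity)]
  · exact pow_mul_exp_neg_mul_le (n + 1) hx hs.le
  · calc s ^ (n + 1) * Real.exp (-x * s) = s ^ n * Real.exp (-x * s) * s := by ring
      _ ≤ n.factorial / x ^ n * s := by gcongr; exact pow_mul_exp_neg_mul_le n hx hs.le

lemma integrableOn_pow_succ_Ioo (n : ℕ) (r : ℝ) :
    IntegrableOn (fun s => s ^ (n + 1)) (Ioo 0 r) μ := by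
  refine integrableOn_of_norm_le_of_norm_le_mul hμ measurableSet_Ioo (fun s hs => hs.1)
    (by fun_prop) (A := r ^ (n + 1)) (B := r ^ n) (fun s ⟨hs, hsr⟩ => ?_) fun s ⟨hs, hsr⟩ => ?_ <;>
    rw [Real.norm_of_nonneg (by positivity)]
  · gcongr
  · rw [pow_succ]
    gcongr

lemma hasDerivAt_integral_of_hasDerivAt_pow_mul_exp {F : ℝ → ℝ → ℝ} {n : ℕ} {x : ℝ} (hx : 0 < x)
    (hF_meas : ∀ y, Measurable (F y)) (hF_int : IntegrableOn (F x) (Ioi 0) μ)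
    (hF_deriv : ∀ y s, HasDerivAt (F · s) (-(s ^ (n + 1) * Real.exp (-y * s))) y) :
    HasDerivAt (fun y => ∫ s in Ioi (0 : ℝ), F y s ∂μ) (-laplaceMoment μ (n + 1) x) x := by
  have hbound : ∀ᵐ s ∂μ.restrict (Ioi 0), ∀ y ∈ Ioi (x / 2),
      ‖-(s ^ (n + 1) * Real.exp (-y * s))‖ ≤ s ^ (n + 1) * Real.exp (-(x / 2) * s) := by
    filter_upwards [ae_restrict_mem measurableSet_Ioi] with s (hs : 0 < s) y hy
    rw [norm_neg, Real.norm_of_nonneg (by positivity)]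
    gcongr
    exact le_of_lt hy
  rw [laplaceMoment, ← integral_neg]
  exact (hasDerivAt_integral_of_dominated_loc_of_deriv_le (Ioi_mem_nhds (half_lt_self hx))
    (.of_forall fun y => (hF_meas y).aestronglyMeasurable) hF_int
    (by fun_prop) hbound (integrableOn_pow_succ_mul_exp_neg_mul hμ n (half_pos hx))
    (.of_forall fun s y _ => hF_deriv y s)).2

lemma hasDerivAt_integral_one_sub_exp {x : ℝ} (hx : 0 < x) :
    HasDerivAt (fun y => ∫ s in Ioi (0 : ℝ), (1 - Real.exp (-y * s)) ∂μ)
      (laplaceMoment μ 1 x) x := by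
  have hderiv := hasDerivAt_integral_of_hasDerivAt_pow_mul_exp hμ (n := 0)
    (F := fun y s => Real.exp (-y * s) - 1) hx (by fun_prop)
    (integrableOn_exp_neg_mul_sub_one hμ hx.le)
    fun y s => by simpa using (hasDerivAt_exp_neg_mul y s).sub_const 1
  simpa [← integral_neg] using hderiv.fun_neg

lemma hasDerivAt_laplaceMoment_succ (n : ℕ) {x : ℝ} (hx : 0 < x) :
    HasDerivAt (laplaceMoment μ (n + 1)) (-laplaceMoment μ (n + 2) x) x :=
  hasDerivAt_integral_of_hasDerivAt_pow_mul_exp hμ hx (by fun_prop)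
    (integrableOn_pow_succ_mul_exp_neg_mul hμ n hx) fun y s =>
    ((hasDerivAt_exp_neg_mul y s).const_mul (s ^ (n + 1))).congr_deriv (by ring)

lemma laplaceMoment_succ_le_integral_Ioo_add (n : ℕ) {x y r : ℝ} (hx : 0 < x) (hxy : x ≤ y)
    (hr : 0 < r) :
    laplaceMoment μ (n + 1) y ≤ ∫ s in Ioo (0 : ℝ) r, s ^ (n + 1) ∂μ
      + Real.exp (-((y - x) * r)) * laplaceMoment μ (n + 1) x := by
  have hint_x := integrableOn_pow_succ_mul_exp_neg_mul hμ n hx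
  have hint_y := integrableOn_pow_succ_mul_exp_neg_mul hμ n (hx.trans_le hxy)
  have hIoo : Ioo 0 r ⊆ Ioi 0 := fun s hs => hs.1
  have hIci : Ici r ⊆ Ioi 0 := fun s hs => hr.trans_le hs
  have hnear : ∫ s in Ioo (0 : ℝ) r, s ^ (n + 1) * Real.exp (-y * s) ∂μ
      ≤ ∫ s in Ioo (0 : ℝ) r, s ^ (n + 1) ∂μ := by
    refine setIntegral_mono_on (hint_y.mono_set hIoo) (integrableOn_pow_succ_Ioo hμ n r)
      measurableSet_Ioo fun s ⟨hs, _⟩ => ?_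
    exact mul_le_of_le_one_right (by positivity) (exp_neg_mul_le_one (hx.le.trans hxy) hs.le)
  have hfar : ∫ s in Ici r, s ^ (n + 1) * Real.exp (-y * s) ∂μ
      ≤ ∫ s in Ici r, Real.exp (-((y - x) * r)) * (s ^ (n + 1) * Real.exp (-x * s)) ∂μ := by
    refine setIntegral_mono_on (hint_y.mono_set hIci) ((hint_x.mono_set hIci).const_mul _)
      measurableSet_Ici fun s hs => ?_
    have hs0 : 0 < s := hIci hs
    have hexp : Real.exp (-y * s) ≤ Real.exp (-((y - x) * r)) * Real.exp (-x * s) := by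
      rw [← Real.exp_add, Real.exp_le_exp]
      linarith [mul_le_mul_of_nonneg_left (mem_Ici.1 hs) (sub_nonneg.2 hxy)]
    rw [mul_left_comm]
    gcongr
  have hfar_le : ∫ s in Ici r, s ^ (n + 1) * Real.exp (-x * s) ∂μ ≤ laplaceMoment μ (n + 1) x := by
    refine setIntegral_mono_set hint_x ?_ hIci.eventuallyLE
    filter_upwards [ae_restrict_mem measurableSet_Ioi] with s (hs : 0 < s)
    exact (by positivity : 0 ≤ s ^ (n + 1) * Real.exp (-x * s))
  rw [integral_const_mul] at hfar
  rw [laplaceMoment, ← Ioo_union_Ici_eq_Ioi hr,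
    setIntegral_union (Iio_disjoint_Ici le_rfl |>.mono_left Ioo_subset_Iio_self) measurableSet_Ici
      (hint_y.mono_set hIoo) (hint_y.mono_set hIci)]
  exact add_le_add hnear (hfar.trans (by gcongr))

section BernsteinRepresentation

variable {φ : ℝ → ℝ} {a b : ℝ}
  (hφ : ∀ x : ℝ, 0 < x → φ x = a + b * x + ∫ s in Ioi (0 : ℝ), (1 - Real.exp (-x * s)) ∂μ)
include hφ

lemma deriv_eq_add_laplaceMoment_one {x : ℝ} (hx : 0 < x) :
    deriv φ x = b + laplaceMoment μ 1 x := by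
  have hderiv := (((hasDerivAt_id x).const_mul b).const_add a).add
    (hasDerivAt_integral_one_sub_exp hμ hx)
  rw [mul_one] at hderiv
  refine (hderiv.congr_of_eventuallyEq ?_).deriv
  filter_upwards [Ioi_mem_nhds hx] with y hy using hφ y hy

lemma neg_deriv_deriv_eq_laplaceMoment_two {x : ℝ} (hx : 0 < x) :
    -deriv (deriv φ) x = laplaceMoment μ 2 x := by
  have hderiv := (hasDerivAt_laplaceMoment_succ hμ 0 hx).const_add b
  rw [neg_eq_iff_eq_neg]
  refine (hderiv.congr_of_eventuallyEq ?_).deriv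
  filter_upwards [Ioi_mem_nhds hx] with y hy using deriv_eq_add_laplaceMoment_one hμ hφ hy

end BernsteinRepresentation

end LevyMeasure

lemma exists_mul_laplaceMoment_succ_le_integral_Ioo {c δ : ℝ} (θ : ℝ) (hc : 0 < c) (hδ : 0 < δ) :
    ∃ C : ℝ, 0 < C ∧ ∀ (μ : Measure ℝ) (n : ℕ) (x₀ : ℝ),
      IntegrableOn (fun s => min 1 s) (Ioi 0) μ → 0 ≤ x₀ →
      WLSC (laplaceMoment μ (n + 1)) θ c x₀ → ∀ x : ℝ, x₀ < x →
        C * laplaceMoment μ (n + 1) x ≤ ∫ s in Ioo (0 : ℝ) (δ / x), s ^ (n + 1) ∂μ := by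
  obtain ⟨l, hl1, hl⟩ := exists_exp_neg_mul_le_mul_rpow θ (half_pos hc) hδ
  refine ⟨c / 2 * l ^ θ, by positivity, fun μ n x₀ hμ hx₀ hW x hx => ?_⟩
  have hx0 : 0 < x := hx₀.trans_lt hx
  have hnonneg : 0 ≤ laplaceMoment μ (n + 1) x :=
    setIntegral_nonneg measurableSet_Ioi fun s (hs : 0 < s) => by positivity
  have hrate : (l * x - x) * (δ / x) = (l - 1) * δ := by field_simp
  have hupper := laplaceMoment_succ_le_integral_Ioo_add hμ n hx0
    (le_mul_of_one_le_left hx0.le hl1) (div_pos hδ hx0)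
  rw [hrate] at hupper
  linarith [hW l hl1 x hx, mul_le_mul_of_nonneg_right hl hnonneg]

theorem bernstein_second_derivative_truncated_moment_bound_general
    (α : ℝ) {c δ : ℝ} (hc : 0 < c) (hδ : 0 < δ) :
    ∃ C : ℝ, 0 < C ∧
      ∀ (φ : ℝ → ℝ) (a b x₀ : ℝ) (μ : Measure ℝ),
        0 ≤ x₀ →
        (∫⁻ s in Ioi (0 : ℝ), ENNReal.ofReal (min 1 s) ∂μ ≠ ⊤) →
        (∀ x : ℝ, 0 < x →
          φ x = a + b * x + ∫ s in Ioi (0 : ℝ), (1 - Real.exp (-x * s)) ∂μ) →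
        WLSC (fun x => -(deriv (deriv φ) x)) (α - 2) c x₀ →
        ∀ x : ℝ, x₀ < x →
          C * -(deriv (deriv φ) x) ≤ ∫ s in Ioo (0 : ℝ) (δ / x), s ^ 2 ∂μ := by
  obtain ⟨C, hC, hbound⟩ := exists_mul_laplaceMoment_succ_le_integral_Ioo (α - 2) hc hδ
  refine ⟨C, hC, fun φ a b x₀ μ hx₀ hμ hφ hW x hx => ?_⟩
  have hmin := integrableOn_min_one_of_lintegral_ne_top hμ
  have hφ'' : EqOn (fun x => -(deriv (deriv φ) x)) (laplaceMoment μ 2) (Ioi x₀) :=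
    fun y hy => neg_deriv_deriv_eq_laplaceMoment_two hmin hφ (hx₀.trans_lt hy)
  calc C * -(deriv (deriv φ) x) = C * laplaceMoment μ 2 x := congrArg (C * ·) (hφ'' hx)
    _ ≤ ∫ s in Ioo (0 : ℝ) (δ / x), s ^ 2 ∂μ := hbound μ 1 x₀ hmin hx₀ (hW.congr hx₀ hφ'') x hx

/-- If `−φ'' ∈ WLSC(α−2, c, x₀)`, then there is a constant `C > 0`
depending only on `α` and `c` such that `C(−φ''(x)) ≤ ∫_{(0,1/x)} s² μ(ds)` for all
`x > x₀`. -/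
theorem bernstein_second_derivative_truncated_moment_bound
    (α c : ℝ) (hα : 0 < α) (hc : 0 < c) (hc1 : c ≤ 1) :
    ∃ C : ℝ, 0 < C ∧
      ∀ (φ : ℝ → ℝ) (a b x₀ : ℝ) (μ : Measure ℝ),
        0 ≤ a → 0 ≤ b → 0 ≤ x₀ →
        (∫⁻ s in Ioi (0:ℝ), ENNReal.ofReal (min 1 s) ∂μ ≠ ⊤) →
        (∀ x : ℝ, 0 < x →
          φ x = a + b * x + ∫ s in Ioi (0:ℝ), (1 - Real.exp (-x * s)) ∂μ) →
        WLSC (fun x => -(deriv (deriv φ) x)) (α - 2) c x₀ →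
        ∀ x : ℝ, x₀ < x →
          C * -(deriv (deriv φ) x) ≤ ∫ s in Ioo (0:ℝ) (1 / x), s ^ 2 ∂μ := by
  obtain ⟨C, hC, hbound⟩ := bernstein_second_derivative_truncated_moment_bound_general α hc one_pos
  exact ⟨C, hC, fun φ a b x₀ μ _ _ => hbound φ a b x₀ μ⟩
end
end

section
/- Let f be a completely monotone function. If −f' ∈ WLSC(τ, c, x₀) for some c ∈ (0,1], x₀ ≥ 0 and τ ≤ −1, then f ∈ WLSC(1+τ, c, x₀). Analogously, if −f' ∈ WUSC(τ, C, x₀) for some C ≥ 1, x₀ ≥ 0 and τ ≤ −1, then the function f − f(∞) belongs to WUSC(1+τ, C, x₀), where f(∞) = lim_{x→∞} f(x). -/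
open Real Set Filter

noncomputable section

/-- Weak upper scaling property at infinity. -/
def WUSC (f : ℝ → ℝ) (θ C x₀ : ℝ) : Prop :=
  ∀ lam : ℝ, 1 ≤ lam → ∀ x : ℝ, x₀ < x → f (lam * x) ≤ C * lam ^ θ * f x

/-- A function is completely monotone (on `(0,∞)`) if it is smooth there and
`(−1)^n f^{(n)} ≥ 0` for all `n`. -/
def IsCompletelyMonotone (f : ℝ → ℝ) : Prop :=
  ContDiffOn ℝ (⊤ : ℕ∞) f (Ioi 0) ∧
    ∀ (n : ℕ) (x : ℝ), 0 < x → 0 ≤ (-1 : ℝ) ^ n * iteratedDeriv n f x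

/-!
Fix `λ ≥ 1` and put `D y = (f (λ y) - L) - C λ ^ (1 + τ) * (f y - L)` with `L = f(∞)`. The factor
`λ` produced by the chain rule is what raises the exponent from `τ` to `1 + τ`: upper scaling of
`-f'` says exactly that `D' ≥ 0`. As `D` tends to `0` at infinity, `D ≤ 0`, which is upper scaling
of `f - L`. Lower scaling is upper scaling of the negative, and restoring the constant `L ≥ 0` to
`f - L` preserves lower scaling because `c λ ^ (1 + τ) ≤ 1`.
-/

section MonotoneAtTop

variable {α β : Type*} [LinearOrder α] [NoMaxOrder α] [TopologicalSpace β] {f : α → β} {a : α}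

lemma le_of_monotoneOn_Ioi_of_tendsto_atTop [Preorder β] [OrderClosedTopology β] {b : β}
    (hf : MonotoneOn f (Ioi a)) (hlim : Tendsto f atTop (nhds b)) {x : α} (hx : a < x) :
    f x ≤ b :=
  (monotoneOn_iff_monotone.mp hf).ge_of_tendsto (tendsto_comp_val_Ioi_atTop.mpr hlim) ⟨x, hx⟩

lemma tendsto_atTop_sInf_of_antitoneOn_Ioi [ConditionallyCompleteLinearOrder β] [OrderTopology β]
    (hf : AntitoneOn f (Ioi a)) (hbdd : BddBelow (f '' Ioi a)) :
    Tendsto f atTop (nhds (sInf (f '' Ioi a))) := by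
  rw [image_eq_range] at hbdd ⊢
  exact tendsto_comp_val_Ioi_atTop.mp (tendsto_atTop_ciInf (antitoneOn_iff_antitone.mp hf) hbdd)

end MonotoneAtTop

section Scaling

variable {f g : ℝ → ℝ} {θ τ c C x₀ L : ℝ}

lemma wusc_neg_iff : WUSC (fun x => -f x) θ c x₀ ↔ WLSC f θ c x₀ := by
  simp only [WUSC, WLSC, mul_neg, neg_le_neg_iff]

lemma WLSC.add_const {a : ℝ} (hf : WLSC f θ c x₀) (hθ : θ ≤ 0) (hc : c ≤ 1) (ha : 0 ≤ a) :
    WLSC (fun x => f x + a) θ c x₀ := by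
  intro lam hlam x hx
  have hpow : 0 ≤ lam ^ θ := by positivity
  have hfactor : c * lam ^ θ ≤ 1 :=
    (mul_le_of_le_one_left hpow hc).trans (rpow_le_one_of_one_le_of_nonpos hlam hθ)
  calc c * lam ^ θ * (f x + a) = c * lam ^ θ * f x + c * lam ^ θ * a := mul_add _ _ _
    _ ≤ f (lam * x) + a := add_le_add (hf lam hlam x hx) (mul_le_of_le_one_left ha hfactor)

lemma WUSC.sub_limit_of_hasDerivAt (hg : WUSC g τ C x₀) (hx₀ : 0 ≤ x₀)
    (hderiv : ∀ x, x₀ < x → HasDerivAt f (-g x) x) (hlim : Tendsto f atTop (nhds L)) :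
    WUSC (fun x => f x - L) (1 + τ) C x₀ := by
  intro lam hlam x hx
  have hlam₀ : 0 < lam := by positivity
  let D : ℝ → ℝ := fun y => (f (lam * y) - L) - C * lam ^ (1 + τ) * (f y - L)
  have hD_deriv : ∀ y ∈ Ioi x₀, HasDerivAt D (lam * (C * lam ^ τ * g y - g (lam * y))) y := by
    intro y hy
    have hlam_y : x₀ < lam * y := hy.trans_le (le_mul_of_one_le_left (hx₀.trans hy.le) hlam)
    have hscaled : HasDerivAt (fun y => f (lam * y)) (-g (lam * y) * lam) y :=
      (hderiv _ hlam_y).comp y (hasDerivAt_const_mul lam)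
    convert! (hscaled.sub_const L).sub (((hderiv y hy).sub_const L).const_mul _) using 1
    rw [rpow_add hlam₀, rpow_one]
    ring
  have hD_mono : MonotoneOn D (Ioi x₀) := by
    refine monotoneOn_of_hasDerivWithinAt_nonneg (convex_Ioi x₀)
      (fun y hy => (hD_deriv y hy).continuousAt.continuousWithinAt)
      (fun y hy => (hD_deriv y (interior_subset hy)).hasDerivWithinAt) fun y hy => ?_
    exact mul_nonneg hlam₀.le (sub_nonneg.mpr (hg lam hlam y (interior_subset hy)))
  have hD_lim : Tendsto D atTop (nhds 0) := by
    have hlim_scaled := hlim.comp (tendsto_id.const_mul_atTop hlam₀)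
    simpa using (hlim_scaled.sub_const L).sub ((hlim.sub_const L).const_mul (C * lam ^ (1 + τ)))
  exact sub_nonpos.mp (le_of_monotoneOn_Ioi_of_tendsto_atTop hD_mono hD_lim hx)

lemma WLSC.sub_limit_of_hasDerivAt (hg : WLSC g τ c x₀) (hx₀ : 0 ≤ x₀)
    (hderiv : ∀ x, x₀ < x → HasDerivAt f (-g x) x) (hlim : Tendsto f atTop (nhds L)) :
    WLSC (fun x => f x - L) (1 + τ) c x₀ := by
  have hneg := (wusc_neg_iff.mpr hg).sub_limit_of_hasDerivAt hx₀
    (fun x hx => (hderiv x hx).neg) hlim.neg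
  rw [← wusc_neg_iff]
  convert hneg using 2
  simp only [Pi.neg_apply]
  ring

end Scaling

namespace IsCompletelyMonotone

variable {f : ℝ → ℝ}

lemma differentiableOn (hf : IsCompletelyMonotone f) : DifferentiableOn ℝ f (Ioi 0) :=
  hf.1.differentiableOn (by simp)

lemma nonneg (hf : IsCompletelyMonotone f) {x : ℝ} (hx : 0 < x) : 0 ≤ f x := by
  simpa using hf.2 0 x hx

lemma deriv_nonpos (hf : IsCompletelyMonotone f) {x : ℝ} (hx : 0 < x) : deriv f x ≤ 0 := by
  simpa using hf.2 1 x hx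

lemma antitoneOn (hf : IsCompletelyMonotone f) : AntitoneOn f (Ioi 0) :=
  antitoneOn_of_deriv_nonpos (convex_Ioi 0) hf.differentiableOn.continuousOn
    (hf.differentiableOn.mono interior_subset) fun _ hx => hf.deriv_nonpos (interior_subset hx)

lemma exists_nonneg_tendsto_atTop (hf : IsCompletelyMonotone f) :
    ∃ L, 0 ≤ L ∧ Tendsto f atTop (nhds L) := by
  have hnonneg : ∀ y ∈ f '' Ioi 0, 0 ≤ y := forall_mem_image.mpr fun _ hx => hf.nonneg hx
  exact ⟨sInf (f '' Ioi 0), Real.sInf_nonneg hnonneg,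
    tendsto_atTop_sInf_of_antitoneOn_Ioi hf.antitoneOn ⟨0, hnonneg⟩⟩

end IsCompletelyMonotone

theorem completely_monotone_scaling_transfer_general
    (f : ℝ → ℝ) (x₀ L : ℝ) (hf : DifferentiableOn ℝ f (Ioi x₀)) (hx₀ : 0 ≤ x₀)
    (hL : Tendsto f atTop (nhds L)) :
    (0 ≤ L → ∀ c τ : ℝ, c ≤ 1 → τ ≤ -1 →
      WLSC (fun x => -(deriv f x)) τ c x₀ → WLSC f (1 + τ) c x₀) ∧
    (∀ C τ : ℝ, WUSC (fun x => -(deriv f x)) τ C x₀ →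
      WUSC (fun x => f x - L) (1 + τ) C x₀) := by
  have hderiv : ∀ x, x₀ < x → HasDerivAt f (- -deriv f x) x := fun x hx => by
    simpa only [neg_neg] using (hf.differentiableAt (Ioi_mem_nhds hx)).hasDerivAt
  refine ⟨fun hL₀ c τ hc hτ h => ?_, fun C τ h => h.sub_limit_of_hasDerivAt hx₀ hderiv hL⟩
  simpa only [sub_add_cancel] using
    (h.sub_limit_of_hasDerivAt hx₀ hderiv hL).add_const (by linarith) hc hL₀

/-- For a completely monotone `f`: if `−f' ∈ WLSC(τ,c,x₀)` with
`τ ≤ −1` then `f ∈ WLSC(1+τ,c,x₀)`; if `−f' ∈ WUSC(τ,C,x₀)` with `τ ≤ −1` then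
`f − f(∞) ∈ WUSC(1+τ,C,x₀)`, where `f(∞) = lim_{x→∞} f(x)`. -/
theorem completely_monotone_scaling_transfer
    (f : ℝ → ℝ) (x₀ : ℝ)
    (hf : IsCompletelyMonotone f) (hx₀ : 0 ≤ x₀) :
    (∀ c τ : ℝ, 0 < c → c ≤ 1 → τ ≤ -1 →
      WLSC (fun x => -(deriv f x)) τ c x₀ → WLSC f (1 + τ) c x₀) ∧
    (∀ C τ : ℝ, 1 ≤ C → τ ≤ -1 →
      WUSC (fun x => -(deriv f x)) τ C x₀ →
      ∀ L : ℝ, Tendsto f atTop (nhds L) →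
        WUSC (fun x => f x - L) (1 + τ) C x₀) := by
  obtain ⟨M, hM₀, hM⟩ := hf.exists_nonneg_tendsto_atTop
  have hdiff := hf.differentiableOn.mono (Ioi_subset_Ioi hx₀)
  exact ⟨fun c τ _ hc hτ =>
      (completely_monotone_scaling_transfer_general f x₀ M hdiff hx₀ hM).1 hM₀ c τ hc hτ,
    fun C τ _ _ h L hL =>
      (completely_monotone_scaling_transfer_general f x₀ L hdiff hx₀ hL).2 C τ h⟩
end
end
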